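/- Let G be a finite group, let V_0, …, V_d be permutation representations of G, and let M_i ⊆ Aff_G(V_{i-1}, V_i) be layer spaces for i = 1, …, d. Let I := Aff_G(V_d, ℝ) be the invariant layer space (ℝ carrying the trivial G-action) and L := Aff(ℝ, ℝ). Assume the activation σ : ℝ → ℝ is continuous and not a polynomial, and set ρ = ρ(U(M_1, …, M_d, I)). Then U(M_1, …, M_d, I, L) = C_ρ(V_0, ℝ); that is, the universality class of these invariant networks with a fully connected readout layer equals the class of all continuous real-valued functions on V_0 respecting the separation relation ρ. -/

import Mathlib

open scoped BigOperators

noncomputable section EquivUnivPreamble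

/-- Point-wise activation: apply `σ` coordinatewise. -/
def act (σ : ℝ → ℝ) {Z : Type} (v : Z → ℝ) : Z → ℝ := fun z => σ (v z)

/-- The action of a group element `g` on a real-valued function `v : Y → ℝ` induced by a
`G`-action on `Y` (the permutation representation `ℝ^Y`): `(g • v) y = v (g⁻¹ • y)`. -/
def pSMul {G Y : Type} [Group G] [MulAction G Y] (g : G) (v : Y → ℝ) : Y → ℝ :=
  fun y => v (g⁻¹ • y)

/-- `G`-equivariance of a map between permutation representations. -/
def Equivariant (G : Type) [Group G] {Y Z : Type} [MulAction G Y] [MulAction G Z]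
    (f : (Y → ℝ) → (Z → ℝ)) : Prop :=
  ∀ (g : G) (v : Y → ℝ), f (pSMul g v) = pSMul g (f v)

/-- A map between permutation representations is affine. -/
def IsAffine {Y Z : Type} (f : (Y → ℝ) → (Z → ℝ)) : Prop :=
  ∃ (φ : (Y → ℝ) →ₗ[ℝ] (Z → ℝ)) (b : Z → ℝ), ∀ v, f v = φ v + b

/-- A layer space: the set of maps `v ↦ ∑ᵢ cᵢ φⁱ(v) + b` where `φ¹, …, φᵏ` are fixed
`G`-equivariant linear maps and the bias `b` ranges over all functions constant on
`G`-orbits (i.e. all `∑ⱼ yⱼ 1_{Xⱼ}` with `Xⱼ` the orbits). -/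
def IsLayerSpace (G : Type) [Group G] {Y Z : Type} [MulAction G Y] [MulAction G Z]
    (M : Set ((Y → ℝ) → (Z → ℝ))) : Prop :=
  ∃ (k : ℕ) (φ : Fin k → ((Y → ℝ) →ₗ[ℝ] (Z → ℝ))),
    (∀ i, Equivariant G (φ i : (Y → ℝ) → (Z → ℝ))) ∧
    M = { f | ∃ (c : Fin k → ℝ) (b : Z → ℝ),
            (∀ (g : G) (z : Z), b (g • z) = b z) ∧
            ∀ v, f v = (∑ i, c i • φ i v) + b }

/-- `M^{k×h}`: the layer space `M` with input multiplicity `k` and output multiplicity `h`,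
`(v₁,…,v_k) ↦ (∑ⱼ f_{1,j}(vⱼ), …, ∑ⱼ f_{h,j}(vⱼ))`, identifying `V ⊗ ℝᵏ` with
`Fin k × Y → ℝ`. -/
def layerPow {Y Z : Type} (M : Set ((Y → ℝ) → (Z → ℝ))) (k h : ℕ) :
    Set ((Fin k × Y → ℝ) → (Fin h × Z → ℝ)) :=
  { F | ∃ f : Fin h → Fin k → ((Y → ℝ) → (Z → ℝ)),
      (∀ i j, f i j ∈ M) ∧
      ∀ (v : Fin k × Y → ℝ) (p : Fin h × Z), F v p = ∑ j, f p.1 j (fun y => v (j, y)) p.2 }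

/-- `M^{1×h}` under the canonical identification `V ⊗ ℝ¹ ≅ V` of the input. -/
def layerPowIn {Y Z : Type} (M : Set ((Y → ℝ) → (Z → ℝ))) (h : ℕ) :
    Set ((Y → ℝ) → (Fin h × Z → ℝ)) :=
  { F | ∃ f : Fin h → ((Y → ℝ) → (Z → ℝ)), (∀ i, f i ∈ M) ∧
      ∀ (v : Y → ℝ) (p : Fin h × Z), F v p = f p.1 v p.2 }

/-- `M^{k×1}` under the canonical identification `W ⊗ ℝ¹ ≅ W` of the output. -/
def layerPowOut {Y Z : Type} (M : Set ((Y → ℝ) → (Z → ℝ))) (k : ℕ) :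
    Set ((Fin k × Y → ℝ) → (Z → ℝ)) :=
  { F | ∃ f : Fin k → ((Y → ℝ) → (Z → ℝ)), (∀ j, f j ∈ M) ∧
      ∀ (v : Fin k × Y → ℝ) (z : Z), F v z = ∑ j, f j (fun y => v (j, y)) z }

/-- Evaluation of a chain of `d+1` layers with the point-wise activation `σ` between
consecutive layers: `φ_d ∘ σ̃ ∘ ⋯ ∘ σ̃ ∘ φ_0`. -/
def chainEval (σ : ℝ → ℝ) : ∀ (d : ℕ) (Y : Fin (d + 2) → Type)
    (φ : ∀ i : Fin (d + 1), (Y i.castSucc → ℝ) → (Y i.succ → ℝ)),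
    (Y 0 → ℝ) → (Y (Fin.last (d + 1)) → ℝ)
  | 0, _, φ => φ 0
  | (d + 1), Y, φ => fun v =>
      φ (Fin.last (d + 1))
        (act σ (chainEval σ d (fun i : Fin (d + 2) => Y i.castSucc)
          (fun i : Fin (d + 1) => φ i.castSucc) v))

/-- The neural space `N(M₀, …, M_d)` of a chain of `d+1` layer spaces. -/
def NeuralSpace (σ : ℝ → ℝ) (d : ℕ) (Y : Fin (d + 2) → Type)
    (M : ∀ i : Fin (d + 1), Set ((Y i.castSucc → ℝ) → (Y i.succ → ℝ))) :
    Set ((Y 0 → ℝ) → (Y (Fin.last (d + 1)) → ℝ)) :=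
  { F | ∃ φ : ∀ i : Fin (d + 1), (Y i.castSucc → ℝ) → (Y i.succ → ℝ),
      (∀ i, φ i ∈ M i) ∧ F = chainEval σ d Y φ }

/-- All networks `N(M₀^{1×k₁}, M₁^{k₁×k₂}, …, M_d^{k_d×k})` for the chain `M₀,…,M_d`, with
arbitrary interior multiplicities and fixed output multiplicity `k` (union over the interior
multiplicities). -/
def WPre (σ : ℝ → ℝ) : ∀ (d : ℕ) (Y : Fin (d + 2) → Type)
    (M : ∀ i : Fin (d + 1), Set ((Y i.castSucc → ℝ) → (Y i.succ → ℝ))) (k : ℕ),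
    Set ((Y 0 → ℝ) → (Fin k × Y (Fin.last (d + 1)) → ℝ))
  | 0, _, M, k => layerPowIn (M 0) k
  | (d + 1), Y, M, k =>
      { F | ∃ (k' : ℕ) (g : (Y 0 → ℝ) → (Fin k' × Y (Fin.last (d + 1)).castSucc → ℝ)),
          g ∈ WPre σ d (fun i : Fin (d + 2) => Y i.castSucc)
                (fun i : Fin (d + 1) => M i.castSucc) k' ∧
          ∃ f ∈ layerPow (M (Fin.last (d + 1))) k' k,
          F = fun v => f (act σ (g v)) }

/-- The network space `N(M₀^{1×k}, M₁^{k×k}, …, M_d^{k×k})`: all multiplicities equal to `k`. -/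
def WFix (σ : ℝ → ℝ) : ∀ (d : ℕ) (Y : Fin (d + 2) → Type)
    (M : ∀ i : Fin (d + 1), Set ((Y i.castSucc → ℝ) → (Y i.succ → ℝ))) (k : ℕ),
    Set ((Y 0 → ℝ) → (Fin k × Y (Fin.last (d + 1)) → ℝ))
  | 0, _, M, k => layerPowIn (M 0) k
  | (d + 1), Y, M, k =>
      { F | ∃ g ∈ WFix σ d (fun i : Fin (d + 2) => Y i.castSucc)
                (fun i : Fin (d + 1) => M i.castSucc) k,
          ∃ f ∈ layerPow (M (Fin.last (d + 1))) k k,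
          F = fun v => f (act σ (g v)) }

/-- Closure in the topology of uniform convergence on compact sets. -/
def UnifClosure {A B : Type} [TopologicalSpace A] [PseudoMetricSpace B]
    (S : Set (A → B)) : Set (A → B) :=
  { F | ∀ K : Set A, IsCompact K → ∀ ε : ℝ, 0 < ε → ∃ g ∈ S, ∀ x ∈ K, dist (F x) (g x) < ε }

/-- Separation relation of a family of functions. -/
def sepRel {A B : Type} (S : Set (A → B)) : Set (A × A) :=
  { p | ∀ f ∈ S, f p.1 = f p.2 }

/-- Entry-wise separation relation at the output entry `z`. -/
def sepRelAt {A Z : Type} (S : Set (A → (Z → ℝ))) (z : Z) : Set (A × A) :=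
  { p | ∀ f ∈ S, f p.1 z = f p.2 z }

/-- `C_ρ(A, B)`: continuous functions respecting the relation `ρ`. -/
def Crho {A B : Type} [TopologicalSpace A] [TopologicalSpace B] (ρ : Set (A × A)) :
    Set (A → B) :=
  { f | Continuous f ∧ ∀ p ∈ ρ, f p.1 = f p.2 }

/-- `C_ρ̄(A, ℝ^Z)` for a family of entry-wise relations `ρ̄ = (ρ_z)_{z ∈ Z}`. -/
def CrhoEntryRel {A Z : Type} [TopologicalSpace A] (ρ : Z → Set (A × A)) :
    Set (A → (Z → ℝ)) :=
  { f | Continuous f ∧ ∀ (z : Z), ∀ p ∈ ρ z, f p.1 z = f p.2 z }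

/-- `σ` is not a polynomial function. -/
def NotPolynomial (σ : ℝ → ℝ) : Prop :=
  ¬ ∃ p : Polynomial ℝ, ∀ x : ℝ, σ x = Polynomial.eval x p

/-- `c+1` widened copies of the layer space `M ⊆ Aff_G(ℝ^Z, ℝ^Z)`, from input multiplicity
`kin` to output multiplicity `kout` (union over interior multiplicities). -/
def WRep (σ : ℝ → ℝ) {Z : Type} (M : Set ((Z → ℝ) → (Z → ℝ))) :
    ∀ (_c kin kout : ℕ), Set ((Fin kin × Z → ℝ) → (Fin kout × Z → ℝ))
  | 0, kin, kout => layerPow M kin kout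
  | (c + 1), kin, kout =>
      { F | ∃ k, ∃ g ∈ WRep σ M c kin k, ∃ f ∈ layerPow M k kout,
          F = fun v => f (act σ (g v)) }

/-- `c+1` widened copies of `M`, starting at input multiplicity `kin` and ending with
output multiplicity `1` (canonically identified with `ℝ^Z`). -/
def WRepOut (σ : ℝ → ℝ) {Z : Type} (M : Set ((Z → ℝ) → (Z → ℝ))) :
    ∀ (_c kin : ℕ), Set ((Fin kin × Z → ℝ) → (Z → ℝ))
  | 0, kin => layerPowOut M kin
  | (c + 1), kin =>
      { F | ∃ k, ∃ g ∈ WRep σ M c kin k, ∃ f ∈ layerPowOut M k,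
          F = fun v => f (act σ (g v)) }

/-- `c+1` widened copies of `M`, with input multiplicity `1` (identified with `ℝ^Z`) and
output multiplicity `k`. -/
def WRepIn (σ : ℝ → ℝ) {Z : Type} (M : Set ((Z → ℝ) → (Z → ℝ))) :
    ∀ (_c k : ℕ), Set ((Z → ℝ) → (Fin k × Z → ℝ))
  | 0, k => layerPowIn M k
  | (c + 1), k =>
      { F | ∃ k', ∃ g ∈ WRepIn σ M c k', ∃ f ∈ layerPow M k' k,
          F = fun v => f (act σ (g v)) }

/-- The universality class `U(M, …, M)` of `c+2` copies of a layer space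
`M ⊆ Aff_G(ℝ^Z, ℝ^Z)`. -/
def UClassRep (σ : ℝ → ℝ) {Z : Type} [Fintype Z] (M : Set ((Z → ℝ) → (Z → ℝ))) (c : ℕ) :
    Set ((Z → ℝ) → (Z → ℝ)) :=
  UnifClosure { F | ∃ k, ∃ g ∈ WRepIn σ M c k, ∃ f ∈ layerPowOut M k,
      F = fun v => f (act σ (g v)) }

/-- The universality class `U(M₀, …, M_d, M, …, M)` of the chain `M₀, …, M_d` followed by
`c+1` copies of `M`. -/
def UClassPreRep (σ : ℝ → ℝ) (d : ℕ) (Y : Fin (d + 2) → Type)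
    [Fintype (Y (Fin.last (d + 1)))]
    (Mpre : ∀ i : Fin (d + 1), Set ((Y i.castSucc → ℝ) → (Y i.succ → ℝ)))
    (M : Set ((Y (Fin.last (d + 1)) → ℝ) → (Y (Fin.last (d + 1)) → ℝ))) (c : ℕ) :
    Set ((Y 0 → ℝ) → (Y (Fin.last (d + 1)) → ℝ)) :=
  UnifClosure { F | ∃ k, ∃ g ∈ WPre σ d Y Mpre k, ∃ f ∈ WRepOut σ M c k,
      F = fun v => f (act σ (g v)) }

/-- The universality class `U(M₀, …, M_d, N)` of the chain `M₀, …, M_d` followed by one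
extra layer space `N`. -/
def UClassApp1 (σ : ℝ → ℝ) (d : ℕ) (Y : Fin (d + 2) → Type)
    (M : ∀ i : Fin (d + 1), Set ((Y i.castSucc → ℝ) → (Y i.succ → ℝ)))
    {Z : Type} [Fintype Z]
    (N : Set ((Y (Fin.last (d + 1)) → ℝ) → (Z → ℝ))) : Set ((Y 0 → ℝ) → (Z → ℝ)) :=
  UnifClosure { F | ∃ k, ∃ g ∈ WPre σ d Y M k, ∃ f ∈ layerPowOut N k,
      F = fun v => f (act σ (g v)) }

/-- The universality class `U(M₀, …, M_d, N₁, N₂)` of the chain `M₀, …, M_d` followed by two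
extra layer spaces `N₁, N₂`. -/
def UClassApp2 (σ : ℝ → ℝ) (d : ℕ) (Y : Fin (d + 2) → Type)
    (M : ∀ i : Fin (d + 1), Set ((Y i.castSucc → ℝ) → (Y i.succ → ℝ)))
    {Z₁ Z₂ : Type} [Fintype Z₂]
    (N₁ : Set ((Y (Fin.last (d + 1)) → ℝ) → (Z₁ → ℝ)))
    (N₂ : Set ((Z₁ → ℝ) → (Z₂ → ℝ))) : Set ((Y 0 → ℝ) → (Z₂ → ℝ)) :=
  UnifClosure { F | ∃ k₁, ∃ g ∈ WPre σ d Y M k₁, ∃ k₂, ∃ m ∈ layerPow N₁ k₁ k₂,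
      ∃ f ∈ layerPowOut N₂ k₂, F = fun v => f (act σ (m (act σ (g v)))) }

/-- The universality class `U(M₁, M₂, M₃)` of three layer spaces on a common space `ℝ^Z`. -/
def UClass3 (σ : ℝ → ℝ) {Z : Type} [Fintype Z] (M₁ M₂ M₃ : Set ((Z → ℝ) → (Z → ℝ))) :
    Set ((Z → ℝ) → (Z → ℝ)) :=
  UnifClosure { F | ∃ k₁ k₂, ∃ g ∈ layerPowIn M₁ k₁, ∃ m ∈ layerPow M₂ k₁ k₂,
      ∃ f ∈ layerPowOut M₃ k₂, F = fun v => f (act σ (m (act σ (g v)))) }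

/-- The invariant layer space `I = Aff_G(ℝ^Y, ℝ)`: all `G`-invariant affine maps, with `ℝ`
realized as the trivial permutation representation `ℝ^{Unit}`. -/
def InvAff (G : Type) [Group G] {Y : Type} [MulAction G Y] :
    Set ((Y → ℝ) → (Unit → ℝ)) :=
  { f | IsAffine f ∧ ∀ (g : G) (v : Y → ℝ), f (pSMul g v) = f v }

/-- The fully connected layer space `L = Aff(ℝ, ℝ)`, with `ℝ` realized as `ℝ^{Unit}`. -/
def Lfull : Set ((Unit → ℝ) → (Unit → ℝ)) :=
  { f | ∃ a b : ℝ, f = fun v _ => a * v () + b }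

/-- The width-1 convolutional layer space `C ⊆ Aff_G(ℝ^X, ℝ^X)`:
`v ↦ a·v + (bias constant on `G`-orbits)`, i.e. `v ↦ a·v + ∑ⱼ yⱼ 1_{Xⱼ}`. -/
def ConvG (G : Type) [Group G] {X : Type} [MulAction G X] : Set ((X → ℝ) → (X → ℝ)) :=
  { f | ∃ (a : ℝ) (b : X → ℝ), (∀ (g : G) (z : X), b (g • z) = b z) ∧
      f = fun v z => a * v z + b z }

/-- The width-1 convolutional layer space for `S_n` acting on `ℝ^n`:
`C = { v ↦ a·v + b𝟙 }`. -/
def ConvC (n : ℕ) : Set ((Fin n → ℝ) → (Fin n → ℝ)) :=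
  { f | ∃ a b : ℝ, f = fun v i => a * v i + b }

/-- The PointNet (DeepSets) layer space for `S_n` acting on `ℝ^n`:
`P = { v ↦ (a·Id + c·𝟙𝟙ᵀ) v + b𝟙 }`. -/
def PointNetP (n : ℕ) : Set ((Fin n → ℝ) → (Fin n → ℝ)) :=
  { f | ∃ a c b : ℝ, f = fun v i => a * v i + c * (∑ j, v j) + b }
end EquivUnivPreamble

/-! Fix a compact set `K`, a vector space `S ⊆ C(K)` containing the constants, and a closed subspace
`W ⊆ C(K)` containing `σ ∘ h` for every `h ∈ S`. Since `W` is closed under integrals, it also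
contains `g ∘ h` for every mollification `g` of `σ`; since it is closed under derivatives,
differentiating `s ↦ g ∘ (t + s h)` repeatedly at `0` gives `g⁽ⁿ⁾(t) hⁿ ∈ W`. If every mollification
had vanishing `n`-th derivative, then `σ` would be a limit of polynomials of degree less than `n`,
hence one itself; so `hⁿ ∈ W` for all `n`, and therefore `exp h ∈ W`. The exponentials of `S` are
closed under products, so by Stone–Weierstrass on the quotient by the separation relation of `S`,
`W` contains every continuous function respecting that relation.

For the theorem, `S` consists of the restrictions to `K` of the networks without readout, and `W` is
the closure of the restrictions of all networks; both are vector spaces because networks can be run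
in parallel. -/

open scoped ContDiff Convolution
open MeasureTheory Filter Topology

section ClosedSubspaces

variable {E : Type*} [NormedAddCommGroup E] [NormedSpace ℝ E] {W : Submodule ℝ E}

theorem mem_of_hasDerivAt (hW : IsClosed (W : Set E)) {u : ℝ → E} {u' : E} {t : ℝ}
    (hu : HasDerivAt u u' t) (h : ∀ s, u s ∈ W) : u' ∈ W := by
  have hzero : W.mkQL ∘ u = fun _ => 0 := by
    funext s
    simpa using h s
  have hderiv := W.mkQL.hasFDerivAt.comp_hasDerivAt t hu
  rw [hzero] at hderiv
  simpa using hderiv.unique (hasDerivAt_const t 0)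

theorem integral_mem_of_isClosed [CompleteSpace E] (hW : IsClosed (W : Set E)) {α : Type*}
    [MeasurableSpace α] {μ : Measure α} {u : α → E} (h : ∀ a, u a ∈ W) : ∫ a, u a ∂μ ∈ W := by
  by_cases hu : Integrable u μ
  · have hzero : ∀ a, W.mkQL (u a) = 0 := fun a => by simpa using h a
    have hint := W.mkQL.integral_comp_comm hu
    simp only [hzero, integral_zero] at hint
    simpa using hint.symm
  · rw [integral_undef hu]
    exact W.zero_mem

end ClosedSubspaces

section ContinuousMapCalculus

variable {X : Type*} [TopologicalSpace X] [CompactSpace X]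

theorem hasDerivAt_of_forall_hasDerivAt_apply {E : Type*} [NormedAddCommGroup E]
    [NormedSpace ℝ E] [CompleteSpace E] {u u' : ℝ → C(X, E)} (hu' : Continuous u')
    (h : ∀ t x, HasDerivAt (fun s => u s x) (u' t x) t) (t : ℝ) : HasDerivAt u (u' t) t := by
  have hint : ∀ s, IntervalIntegrable u' volume 0 s := hu'.intervalIntegrable 0
  have hftc : u = fun s => u 0 + ∫ r in (0 : ℝ)..s, u' r := by
    funext s
    ext x
    have heval : (∫ r in (0 : ℝ)..s, u' r) x = ∫ r in (0 : ℝ)..s, u' r x :=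
      ((ContinuousMap.evalCLM ℝ x).intervalIntegral_comp_comm (hint s)).symm
    have hcont : Continuous fun r => u' r x := (ContinuousMap.evalCLM ℝ x).continuous.comp hu'
    rw [ContinuousMap.add_apply, heval, intervalIntegral.integral_eq_sub_of_hasDerivAt
      (fun r _ => h r x) (hcont.intervalIntegrable 0 s), add_sub_cancel]
  rw [hftc]
  exact (intervalIntegral.integral_hasDerivAt_right (hint t)
    (hu'.stronglyMeasurableAtFilter _ _) hu'.continuousAt).const_add _

theorem hasDerivAt_mul_comp_add_smul {f f' : C(ℝ, ℝ)} (hf : ∀ y, HasDerivAt f (f' y) y)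
    (p h k : C(X, ℝ)) (t : ℝ) :
    HasDerivAt (fun s : ℝ => p * f.comp (h + s • k)) (p * k * f'.comp (h + t • k)) t := by
  have hline : Continuous fun s : ℝ => h + s • k := by fun_prop
  refine hasDerivAt_of_forall_hasDerivAt_apply (u' := fun s => p * k * f'.comp (h + s • k))
    (continuous_const.mul (f'.continuous_postcomp.comp hline)) (fun s x => ?_) t
  have hinner : HasDerivAt (fun r : ℝ => h x + r * k x) (k x) s := by
    simpa using ((hasDerivAt_id s).mul_const (k x)).const_add (h x)
  refine (((hf _).comp s hinner).const_mul (p x)).congr_deriv ?_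
  simp only [ContinuousMap.mul_apply, ContinuousMap.comp_apply, ContinuousMap.add_apply,
    ContinuousMap.smul_apply, smul_eq_mul]
  ring

variable {S W : Submodule ℝ C(X, ℝ)}

theorem pow_mul_iteratedDeriv_comp_mem (hW : IsClosed (W : Set C(X, ℝ))) {g : ℝ → ℝ}
    (hg : ContDiff ℝ ∞ g) (hgW : ∀ h ∈ S, (⟨g, hg.continuous⟩ : C(ℝ, ℝ)).comp h ∈ W)
    {h k : C(X, ℝ)} (hh : h ∈ S) (hk : k ∈ S) (n : ℕ) :
    k ^ n * (⟨iteratedDeriv n g, hg.continuous_iteratedDeriv n (mod_cast le_top)⟩ :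
      C(ℝ, ℝ)).comp h ∈ W := by
  induction n generalizing h with
  | zero => simpa using hgW h hh
  | succ n ih =>
    set f : ℕ → C(ℝ, ℝ) := fun m =>
      ⟨iteratedDeriv m g, hg.continuous_iteratedDeriv m (mod_cast le_top)⟩
    have hf : ∀ y, HasDerivAt (f n) (f (n + 1) y) y := fun y => by
      simp only [f, ContinuousMap.coe_mk, iteratedDeriv_succ]
      exact (hg.differentiable_iteratedDeriv n (mod_cast WithTop.coe_lt_top _) y).hasDerivAt
    have hderiv := hasDerivAt_mul_comp_add_smul hf (k ^ n) h k 0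
    rw [zero_smul, add_zero, ← pow_succ] at hderiv
    exact mem_of_hasDerivAt hW hderiv fun s => ih (S.add_mem hh (S.smul_mem s hk))

theorem convolution_comp_mem (hW : IsClosed (W : Set C(X, ℝ))) (hone : 1 ∈ S) {σ : C(ℝ, ℝ)}
    (hσW : ∀ h ∈ S, σ.comp h ∈ W) {φ : ℝ → ℝ} (hφ : Continuous φ) (hφs : HasCompactSupport φ)
    (hg : Continuous (φ ⋆[ContinuousLinearMap.lsmul ℝ ℝ, volume] σ)) {h : C(X, ℝ)}
    (hh : h ∈ S) :
    (⟨φ ⋆[ContinuousLinearMap.lsmul ℝ ℝ, volume] σ, hg⟩ : C(ℝ, ℝ)).comp h ∈ W := by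
  set u : ℝ → C(X, ℝ) := fun t => φ t • σ.comp (h - t • 1) with hu
  have huc : Continuous u :=
    hφ.smul (σ.continuous_postcomp.comp (by fun_prop))
  have hui : Integrable u := huc.integrable_of_hasCompactSupport hφs.smul_right
  have hconv : (⟨φ ⋆[ContinuousLinearMap.lsmul ℝ ℝ, volume] σ, hg⟩ : C(ℝ, ℝ)).comp h =
      ∫ t, u t := by
    ext x
    have heval : (∫ t, u t) x = ∫ t, u t x :=
      ((ContinuousMap.evalCLM ℝ x).integral_comp_comm hui).symm
    rw [heval]
    simp [hu, convolution_def]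
  rw [hconv]
  exact integral_mem_of_isClosed hW fun t =>
    W.smul_mem _ (hσW _ (S.sub_mem hh (S.smul_mem t hone)))

end ContinuousMapCalculus

section NonPolynomial

theorem isClosed_setOf_polynomial_degree_lt (n : ℕ) :
    IsClosed {f : ℝ → ℝ | ∃ p : Polynomial ℝ, p.degree < n ∧ f = fun x => p.eval x} := by
  let evalFun : Polynomial ℝ →ₗ[ℝ] ℝ → ℝ := LinearMap.pi Polynomial.leval
  have : FiniteDimensional ℝ (Polynomial.degreeLT ℝ n) :=
    (Polynomial.degreeLTEquiv ℝ n).symm.finiteDimensional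
  have himage : {f : ℝ → ℝ | ∃ p : Polynomial ℝ, p.degree < n ∧ f = fun x => p.eval x} =
      (Polynomial.degreeLT ℝ n).map evalFun := by
    ext f
    exact exists_congr fun p => and_congr Polynomial.mem_degreeLT.symm eq_comm
  rw [himage]
  exact Submodule.closed_of_finiteDimensional _

theorem exists_polynomial_of_iteratedDeriv_eq_zero {n : ℕ} {g : ℝ → ℝ} (hg : ContDiff ℝ n g)
    (h : ∀ x, iteratedDeriv n g x = 0) :
    ∃ p : Polynomial ℝ, p.degree < n ∧ g = fun x => p.eval x := by
  rcases n with _ | n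
  · exact ⟨0, by simp, funext fun x => by simpa using h x⟩
  refine ⟨∑ i ∈ Finset.range (n + 1),
    Polynomial.monomial i ((i.factorial : ℝ)⁻¹ * iteratedDeriv i g 0),
    Polynomial.mem_degreeLT.1 (Submodule.sum_mem _ fun i hi => Polynomial.mem_degreeLT.2
      ((Polynomial.degree_monomial_le _ _).trans_lt (mod_cast Finset.mem_range.1 hi))),
    funext fun x => ?_⟩
  rcases eq_or_ne 0 x with rfl | hx
  · simp [Polynomial.eval_finsetSum, Finset.sum_range_succ']
  obtain ⟨y, -, hy⟩ := taylor_mean_remainder_lagrange_iteratedDeriv (n := n) hx hg.contDiffOn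
  rw [h y, zero_mul, zero_div, sub_eq_zero] at hy
  rw [hy, taylor_within_apply, Polynomial.eval_finsetSum]
  refine Finset.sum_congr rfl fun i hi => ?_
  have hi' : (i : WithTop ℕ∞) ≤ (n + 1 : ℕ) := mod_cast (Finset.mem_range.1 hi).le
  rw [iteratedDerivWithin_eq_iteratedDeriv (uniqueDiffOn_uIcc hx) (hg.of_le hi').contDiffAt
    Set.left_mem_uIcc, Polynomial.eval_monomial, sub_zero, smul_eq_mul]
  ring

theorem NotPolynomial.exists_iteratedDeriv_convolution_ne_zero {σ : ℝ → ℝ}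
    (hσ : NotPolynomial σ) (hσc : Continuous σ) (n : ℕ) :
    ∃ (φ : ContDiffBump (0 : ℝ)) (t : ℝ),
      iteratedDeriv n (φ.normed volume ⋆[ContinuousLinearMap.lsmul ℝ ℝ, volume] σ) t ≠ 0 := by
  by_contra! hzero
  let φ : ℕ → ContDiffBump (0 : ℝ) := fun i =>
    ⟨1 / (2 * ((i : ℝ) + 1)), 1 / ((i : ℝ) + 1), by positivity, by gcongr; linarith⟩
  have hlim : Tendsto (fun i => (φ i).normed volume ⋆[ContinuousLinearMap.lsmul ℝ ℝ, volume] σ)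
      atTop (𝓝 σ) :=
    tendsto_pi_nhds.2 (ContDiffBump.convolution_tendsto_right_of_continuous
      tendsto_one_div_add_atTop_nhds_zero_nat hσc)
  obtain ⟨p, -, hp⟩ := (isClosed_setOf_polynomial_degree_lt n).mem_of_tendsto hlim <|
    Eventually.of_forall fun i => exists_polynomial_of_iteratedDeriv_eq_zero
      ((φ i).hasCompactSupport_normed.contDiff_convolution_left _ (φ i).contDiff_normed
        hσc.locallyIntegrable) (hzero (φ i))
  exact hσ ⟨p, congrFun hp⟩

end NonPolynomial

section Density

theorem mem_topologicalClosure_of_forall_eq {X : Type*} [TopologicalSpace X] [CompactSpace X]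
    (A : Subalgebra ℝ C(X, ℝ)) {F : C(X, ℝ)}
    (hF : ∀ x y, (∀ f ∈ A, f x = f y) → F x = F y) : F ∈ A.topologicalClosure := by
  let s : Setoid X :=
    { r := fun x y => ∀ f ∈ A, f x = f y
      iseqv := ⟨fun _ _ _ => rfl, fun H f hf => (H f hf).symm,
        fun H H' f hf => (H f hf).trans (H' f hf)⟩ }
  let π : C(X, Quotient s) := ⟨Quotient.mk s, continuous_quotient_mk'⟩
  let B : Subalgebra ℝ C(Quotient s, ℝ) := A.comap (ContinuousMap.compRightAlgHom ℝ ℝ π)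
  have hB : B.SeparatesPoints := by
    intro q q' hq
    induction q using Quotient.inductionOn with | _ x
    induction q' using Quotient.inductionOn with | _ y
    obtain ⟨f, hf, hne⟩ : ∃ f ∈ A, f x ≠ f y := by
      by_contra! H
      exact hq (Quotient.sound H)
    have hlift : ∀ a b, s a b → f a = f b := fun a b H => H f hf
    exact ⟨_, ⟨⟨Quotient.lift f hlift, f.continuous.quotient_lift hlift⟩, hf, rfl⟩, hne⟩
  have hFlift : ∀ a b, s a b → F a = F b := hF
  let F' : C(Quotient s, ℝ) := ⟨Quotient.lift F hFlift, F.continuous.quotient_lift hFlift⟩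
  have hF' : F' ∈ closure (B : Set C(Quotient s, ℝ)) := by
    rw [← Subalgebra.topologicalClosure_coe,
      ContinuousMap.subalgebra_topologicalClosure_eq_top_of_separatesPoints B hB]
    trivial
  exact map_mem_closure (π.continuous_precomp) hF' fun f hf => hf

variable {X : Type*} [TopologicalSpace X] [CompactSpace X] {S W : Submodule ℝ C(X, ℝ)}
  {σ : C(ℝ, ℝ)}

theorem pow_mem_of_comp_mem (hW : IsClosed (W : Set C(X, ℝ))) (hσ : NotPolynomial σ)
    (hone : 1 ∈ S) (hσW : ∀ h ∈ S, σ.comp h ∈ W) {h : C(X, ℝ)} (hh : h ∈ S) (n : ℕ) :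
    h ^ n ∈ W := by
  obtain ⟨φ, t, ht⟩ := hσ.exists_iteratedDeriv_convolution_ne_zero σ.continuous n
  set g := φ.normed volume ⋆[ContinuousLinearMap.lsmul ℝ ℝ, volume] σ
  have hg : ContDiff ℝ ∞ g := φ.hasCompactSupport_normed.contDiff_convolution_left _
    φ.contDiff_normed σ.continuous.locallyIntegrable
  have hmem := pow_mul_iteratedDeriv_comp_mem hW hg (fun k hk => convolution_comp_mem hW hone hσW
    (φ.contDiff_normed (n := 0)).continuous φ.hasCompactSupport_normed hg.continuous hk)
    (S.smul_mem t hone) hh n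
  convert W.smul_mem (iteratedDeriv n g t)⁻¹ hmem using 1
  ext x
  simp [mul_comm, ht]

theorem exp_mem_of_comp_mem (hW : IsClosed (W : Set C(X, ℝ))) (hσ : NotPolynomial σ)
    (hone : 1 ∈ S) (hσW : ∀ h ∈ S, σ.comp h ∈ W) {h : C(X, ℝ)} (hh : h ∈ S) :
    NormedSpace.exp h ∈ W :=
  hW.mem_of_tendsto (NormedSpace.exp_series_hasSum_exp' (𝕂 := ℝ) h) <|
    Eventually.of_forall fun _ => W.sum_mem fun n _ =>
      W.smul_mem _ (pow_mem_of_comp_mem hW hσ hone hσW hh n)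

theorem mem_of_comp_mem_of_forall_eq (hW : IsClosed (W : Set C(X, ℝ))) (hσ : NotPolynomial σ)
    (hone : 1 ∈ S) (hσW : ∀ h ∈ S, σ.comp h ∈ W) {F : C(X, ℝ)}
    (hF : ∀ x y, (∀ h ∈ S, h x = h y) → F x = F y) : F ∈ W := by
  let P : Submonoid C(X, ℝ) :=
    { carrier := NormedSpace.exp '' S
      one_mem' := ⟨0, S.zero_mem, NormedSpace.exp_zero⟩
      mul_mem' := by
        rintro _ _ ⟨h, hh, rfl⟩ ⟨k, hk, rfl⟩
        exact ⟨h + k, S.add_mem hh hk, NormedSpace.exp_add⟩ }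
  have hexp : ∀ (h : C(X, ℝ)) x, NormedSpace.exp h x = Real.exp (h x) := fun h x => by
    rw [Real.exp_eq_exp_ℝ]
    exact NormedSpace.map_exp (ContinuousMap.evalAlgHom ℝ ℝ x) (continuous_eval_const x) h
  have hPW : (Algebra.adjoin ℝ (P : Set C(X, ℝ)) : Set C(X, ℝ)) ⊆ W := by
    intro f hf
    rw [SetLike.mem_coe, ← Subalgebra.mem_toSubmodule, Algebra.adjoin_eq_span,
      Submonoid.closure_eq] at hf
    refine Submodule.span_le.2 ?_ hf
    rintro _ ⟨h, hh, rfl⟩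
    exact exp_mem_of_comp_mem hW hσ hone hσW hh
  refine closure_minimal hPW hW (mem_topologicalClosure_of_forall_eq _ fun x y hxy => hF x y ?_)
  intro h hh
  simpa [hexp] using hxy _ (Algebra.subset_adjoin ⟨h, hh, rfl⟩)

end Density

section UniformClosure

variable {A : Type} [TopologicalSpace A]

theorem subset_unifClosure {B : Type} [PseudoMetricSpace B] (S : Set (A → B)) :
    S ⊆ UnifClosure S :=
  fun F hF _ _ _ hε => ⟨F, hF, fun _ _ => by simpa using hε⟩

theorem continuous_of_mem_unifClosure [WeaklyLocallyCompactSpace A] {B : Type}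
    [PseudoMetricSpace B] {S : Set (A → B)} (hS : ∀ f ∈ S, Continuous f) {F : A → B}
    (hF : F ∈ UnifClosure S) : Continuous F := by
  refine continuous_of_locally_uniform_approx_of_continuousAt fun x u hu => ?_
  obtain ⟨ε, hε, hεu⟩ := Metric.mem_uniformity_dist.1 hu
  obtain ⟨K, hK, hKx⟩ := exists_compact_mem_nhds x
  obtain ⟨g, hg, hgF⟩ := hF K hK ε hε
  exact ⟨K, hKx, g, (hS g hg).continuousAt, fun y hy => hεu (hgF y hy)⟩

theorem sepRel_unifClosure {B : Type} [MetricSpace B] (S : Set (A → B)) :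
    sepRel (UnifClosure S) = sepRel S := by
  refine Set.Subset.antisymm (fun p hp f hf => hp f (subset_unifClosure S hf)) ?_
  rintro ⟨x, y⟩ hS F hF
  refine dist_le_zero.1 (le_of_forall_pos_le_add fun ε hε => ?_)
  obtain ⟨g, hg, hgF⟩ := hF {x, y} (Set.toFinite _).isCompact (ε / 2) (half_pos hε)
  have hx : dist (F x) (g y) < ε / 2 := hS g hg ▸ hgF x (by simp)
  have hy : dist (F y) (g y) < ε / 2 := hgF y (by simp)
  linarith [dist_triangle_right (F x) (F y) (g y)]

theorem unifClosure_subset_crho [WeaklyLocallyCompactSpace A] {B : Type} [MetricSpace B]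
    {S : Set (A → B)} (hS : ∀ f ∈ S, Continuous f) : UnifClosure S ⊆ Crho (sepRel S) :=
  fun _ hF => ⟨continuous_of_mem_unifClosure hS hF,
    fun _ hp => (sepRel_unifClosure S).symm.subset hp _ hF⟩

/-- Continuous real functions as functions with values in `ℝ^{Unit}`, the model of the trivial
representation `ℝ` in the statement. -/
def toUnitValued (A : Type) [TopologicalSpace A] : C(A, ℝ) →ₗ[ℝ] (A → Unit → ℝ) where
  toFun f v _ := f v
  map_add' _ _ := rfl
  map_smul' _ _ := rfl

theorem crho_sepRel_subset_unifClosure {σ : ℝ → ℝ} (hσc : Continuous σ) (hσ : NotPolynomial σ)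
    {S T : Submodule ℝ (A → Unit → ℝ)} (hSc : ∀ h ∈ S, Continuous h) (hone : 1 ∈ S)
    (hST : ∀ h ∈ S, (fun v => act σ (h v)) ∈ T) :
    Crho (sepRel (S : Set (A → Unit → ℝ))) ⊆ UnifClosure (T : Set (A → Unit → ℝ)) := by
  rintro F ⟨hFc, hF⟩ K hK ε hε
  have : CompactSpace K := isCompact_iff_compactSpace.1 hK
  let restrictTo : C(A, ℝ) →ₗ[ℝ] C(K, ℝ) := (ContinuousMap.compRightAlgHom ℝ ℝ
    (⟨Subtype.val, continuous_subtype_val⟩ : C(K, A))).toLinearMap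
  let S' := (S.comap (toUnitValued A)).map restrictTo
  let W := ((T.comap (toUnitValued A)).map restrictTo).topologicalClosure
  have hσW : ∀ h ∈ S', (⟨σ, hσc⟩ : C(ℝ, ℝ)).comp h ∈ W := by
    rintro _ ⟨h, hh, rfl⟩
    exact Submodule.le_topologicalClosure _
      ⟨(⟨σ, hσc⟩ : C(ℝ, ℝ)).comp h, hST _ hh, rfl⟩
  let F' : C(A, ℝ) := ⟨fun v => F v (), (continuous_apply ()).comp hFc⟩
  have hFW : restrictTo F' ∈ W := by
    refine mem_of_comp_mem_of_forall_eq (S := S') (Submodule.isClosed_topologicalClosure _) hσ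
      ⟨1, hone, rfl⟩ hσW fun x y hxy => congrFun (hF (x, y) fun h hh => ?_) ()
    funext
    exact hxy _ ⟨⟨fun v => h v (), (continuous_apply ()).comp (hSc h hh)⟩, hh, rfl⟩
  obtain ⟨_, ⟨g, hg, rfl⟩, hgF⟩ := Metric.mem_closure_iff.1 hFW ε hε
  exact ⟨_, hg, fun x hx => (dist_pi_lt_iff hε).2 fun _ =>
    (ContinuousMap.dist_lt_iff hε).1 hgF ⟨x, hx⟩⟩

end UniformClosure

section Concatenation

variable {Y Z : Type}

/-- The canonical identification `ℝ^Y ⊗ ℝ^{k₁} ⊕ ℝ^Y ⊗ ℝ^{k₂} ≅ ℝ^Y ⊗ ℝ^{k₁ + k₂}`, used to run two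
networks in parallel. -/
def concat {k₁ k₂ : ℕ} (w₁ : Fin k₁ × Y → ℝ) (w₂ : Fin k₂ × Y → ℝ) : Fin (k₁ + k₂) × Y → ℝ :=
  fun p => Fin.append (fun i => w₁ (i, p.2)) (fun j => w₂ (j, p.2)) p.1

@[simp]
theorem concat_castAdd {k₁ k₂ : ℕ} (w₁ : Fin k₁ × Y → ℝ) (w₂ : Fin k₂ × Y → ℝ) (i : Fin k₁)
    (y : Y) : concat w₁ w₂ (Fin.castAdd k₂ i, y) = w₁ (i, y) := by
  simp [concat]

@[simp]
theorem concat_natAdd {k₁ k₂ : ℕ} (w₁ : Fin k₁ × Y → ℝ) (w₂ : Fin k₂ × Y → ℝ) (j : Fin k₂)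
    (y : Y) : concat w₁ w₂ (Fin.natAdd k₁ j, y) = w₂ (j, y) := by
  simp [concat]

theorem act_concat {σ : ℝ → ℝ} {k₁ k₂ : ℕ} (w₁ : Fin k₁ × Y → ℝ) (w₂ : Fin k₂ × Y → ℝ) :
    act σ (concat w₁ w₂) = concat (act σ w₁) (act σ w₂) := by
  funext ⟨i, y⟩
  induction i using Fin.addCases <;> simp [act]

theorem concat_mem_layerPowIn {M : Set ((Y → ℝ) → (Z → ℝ))} {k₁ k₂ : ℕ}
    {g₁ : (Y → ℝ) → (Fin k₁ × Z → ℝ)} {g₂ : (Y → ℝ) → (Fin k₂ × Z → ℝ)}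
    (h₁ : g₁ ∈ layerPowIn M k₁) (h₂ : g₂ ∈ layerPowIn M k₂) :
    (fun v => concat (g₁ v) (g₂ v)) ∈ layerPowIn M (k₁ + k₂) := by
  obtain ⟨f₁, hf₁, e₁⟩ := h₁
  obtain ⟨f₂, hf₂, e₂⟩ := h₂
  refine ⟨Fin.append f₁ f₂, fun i => ?_, fun v ⟨i, z⟩ => ?_⟩
  · induction i using Fin.addCases <;> simp [hf₁, hf₂]
  · induction i using Fin.addCases <;> simp [e₁, e₂]

theorem exists_mem_layerPow_concat {M : Set ((Y → ℝ) → (Z → ℝ))} (hM : 0 ∈ M)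
    {k₁ k₂ l₁ l₂ : ℕ} {m₁ : (Fin k₁ × Y → ℝ) → (Fin l₁ × Z → ℝ)}
    {m₂ : (Fin k₂ × Y → ℝ) → (Fin l₂ × Z → ℝ)} (h₁ : m₁ ∈ layerPow M k₁ l₁)
    (h₂ : m₂ ∈ layerPow M k₂ l₂) :
    ∃ m ∈ layerPow M (k₁ + k₂) (l₁ + l₂),
      ∀ w₁ w₂, m (concat w₁ w₂) = concat (m₁ w₁) (m₂ w₂) := by
  obtain ⟨f₁, hf₁, e₁⟩ := h₁
  obtain ⟨f₂, hf₂, e₂⟩ := h₂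
  let f : Fin (l₁ + l₂) → Fin (k₁ + k₂) → (Y → ℝ) → (Z → ℝ) :=
    Fin.append (fun i => Fin.append (f₁ i) fun _ => 0) (fun i => Fin.append (fun _ => 0) (f₂ i))
  refine ⟨fun v p => ∑ j, f p.1 j (fun y => v (j, y)) p.2, ⟨f, fun i j => ?_, fun v p => rfl⟩,
    fun w₁ w₂ => ?_⟩
  · induction i using Fin.addCases <;> induction j using Fin.addCases <;>
      simp [f, hf₁, hf₂, hM]
  · funext ⟨i, z⟩
    induction i using Fin.addCases <;> simp [f, Fin.sum_univ_add, e₁, e₂]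

theorem exists_mem_layerPowOut_concat {M : Set ((Y → ℝ) → (Z → ℝ))} {k₁ k₂ : ℕ}
    {f₁ : (Fin k₁ × Y → ℝ) → (Z → ℝ)} {f₂ : (Fin k₂ × Y → ℝ) → (Z → ℝ)}
    (h₁ : f₁ ∈ layerPowOut M k₁) (h₂ : f₂ ∈ layerPowOut M k₂) :
    ∃ f ∈ layerPowOut M (k₁ + k₂), ∀ w₁ w₂, f (concat w₁ w₂) = f₁ w₁ + f₂ w₂ := by
  obtain ⟨c₁, hc₁, e₁⟩ := h₁
  obtain ⟨c₂, hc₂, e₂⟩ := h₂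
  let c : Fin (k₁ + k₂) → (Y → ℝ) → (Z → ℝ) := Fin.append c₁ c₂
  refine ⟨fun v z => ∑ j, c j (fun y => v (j, y)) z, ⟨c, fun j => ?_, fun v p => rfl⟩,
    fun w₁ w₂ => ?_⟩
  · induction j using Fin.addCases <;> simp [c, hc₁, hc₂]
  · funext z
    simp [c, Fin.sum_univ_add, e₁, e₂]

theorem smul_mem_layerPowOut {N : Submodule ℝ ((Y → ℝ) → (Z → ℝ))} {k : ℕ}
    {f : (Fin k × Y → ℝ) → (Z → ℝ)} (c : ℝ) (hf : f ∈ layerPowOut (N : Set _) k) :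
    c • f ∈ layerPowOut (N : Set _) k := by
  obtain ⟨f, hf, e⟩ := hf
  exact ⟨fun j => c • f j, fun j => N.smul_mem c (hf j), fun v z => by simp [e, Finset.mul_sum]⟩

end Concatenation

section Networks

variable {A Y Z Z' : Type} {σ : ℝ → ℝ}

/-- A family of network spaces `𝒲 k ⊆ (A → ℝ^Y ⊗ ℝ^k)`, one for each output multiplicity `k`, that
is closed under running two networks in parallel; it models the layers preceding the readout. -/
structure IsConcatClosed (𝒲 : ∀ k, Set (A → (Fin k × Y → ℝ))) : Prop where
  nonempty : ∀ k, (𝒲 k).Nonempty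
  concat_mem : ∀ {k₁ k₂ g₁ g₂}, g₁ ∈ 𝒲 k₁ → g₂ ∈ 𝒲 k₂ →
    (fun v => concat (g₁ v) (g₂ v)) ∈ 𝒲 (k₁ + k₂)

/-- The networks obtained from the family `𝒲` by one more activation and widened layer `M`. -/
def appendLayer (σ : ℝ → ℝ) (𝒲 : ∀ k, Set (A → (Fin k × Y → ℝ)))
    (M : Set ((Y → ℝ) → (Z → ℝ))) (k : ℕ) : Set (A → (Fin k × Z → ℝ)) :=
  {F | ∃ l, ∃ g ∈ 𝒲 l, ∃ f ∈ layerPow M l k, F = fun v => f (act σ (g v))}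

/-- The networks obtained from the family `𝒲` by one more activation and a final layer `N` of
output multiplicity one. -/
def appendOutput (σ : ℝ → ℝ) (𝒲 : ∀ k, Set (A → (Fin k × Y → ℝ)))
    (N : Set ((Y → ℝ) → (Z → ℝ))) : Set (A → (Z → ℝ)) :=
  {F | ∃ k, ∃ g ∈ 𝒲 k, ∃ f ∈ layerPowOut N k, F = fun v => f (act σ (g v))}

variable {𝒲 : ∀ k, Set (A → (Fin k × Y → ℝ))}

theorem isConcatClosed_layerPowIn {M : Set ((Y → ℝ) → (Z → ℝ))} (hM : 0 ∈ M) :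
    IsConcatClosed (layerPowIn M) where
  nonempty _ := ⟨0, fun _ => 0, fun _ => hM, fun _ _ => rfl⟩
  concat_mem := concat_mem_layerPowIn

theorem IsConcatClosed.appendLayer (h𝒲 : IsConcatClosed 𝒲) {M : Set ((Y → ℝ) → (Z → ℝ))}
    (hM : 0 ∈ M) : IsConcatClosed (appendLayer σ 𝒲 M) where
  nonempty k := by
    obtain ⟨g, hg⟩ := h𝒲.nonempty 0
    exact ⟨_, 0, g, hg, 0, ⟨fun _ _ => 0, fun _ _ => hM, fun _ _ => by simp⟩, rfl⟩
  concat_mem := by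
    rintro _ _ _ _ ⟨l₁, g₁, hg₁, f₁, hf₁, rfl⟩ ⟨l₂, g₂, hg₂, f₂, hf₂, rfl⟩
    obtain ⟨f, hf, hconcat⟩ := exists_mem_layerPow_concat hM hf₁ hf₂
    refine ⟨l₁ + l₂, _, h𝒲.concat_mem hg₁ hg₂, f, hf, ?_⟩
    simp only [act_concat, hconcat]

theorem isConcatClosed_wPre {d : ℕ} {Y : Fin (d + 2) → Type}
    {M : ∀ i : Fin (d + 1), Set ((Y i.castSucc → ℝ) → (Y i.succ → ℝ))} (hM : ∀ i, 0 ∈ M i) :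
    IsConcatClosed (WPre σ d Y M) := by
  induction d with
  | zero => exact isConcatClosed_layerPowIn (hM 0)
  | succ d ih =>
    exact (ih (Y := fun i => Y i.castSucc) (M := fun i => M i.castSucc)
      fun i => hM i.castSucc).appendLayer (hM (Fin.last _))

/-- `appendOutput` as a vector space: sums are realized by running two networks in parallel. -/
def outputSubmodule (σ : ℝ → ℝ) (h𝒲 : IsConcatClosed 𝒲)
    (N : Submodule ℝ ((Y → ℝ) → (Z → ℝ))) : Submodule ℝ (A → (Z → ℝ)) where
  carrier := appendOutput σ 𝒲 N
  zero_mem' := by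
    obtain ⟨g, hg⟩ := h𝒲.nonempty 0
    exact ⟨0, g, hg, 0, ⟨fun _ => 0, fun _ => N.zero_mem, fun _ _ => by simp⟩, rfl⟩
  add_mem' := by
    rintro _ _ ⟨k₁, g₁, hg₁, f₁, hf₁, rfl⟩ ⟨k₂, g₂, hg₂, f₂, hf₂, rfl⟩
    obtain ⟨f, hf, hadd⟩ := exists_mem_layerPowOut_concat hf₁ hf₂
    refine ⟨k₁ + k₂, _, h𝒲.concat_mem hg₁ hg₂, f, hf, ?_⟩
    simp only [act_concat, hadd]
    rfl
  smul_mem' := by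
    rintro c _ ⟨k, g, hg, f, hf, rfl⟩
    exact ⟨k, g, hg, c • f, smul_mem_layerPowOut c hf, rfl⟩

theorem IsConcatClosed.one_mem_appendOutput (h𝒲 : IsConcatClosed 𝒲)
    {N : Set ((Y → ℝ) → (Z → ℝ))} (hN : 1 ∈ N) : 1 ∈ appendOutput σ 𝒲 N := by
  obtain ⟨g, hg⟩ := h𝒲.nonempty 1
  exact ⟨1, g, hg, 1, ⟨fun _ => 1, fun _ => hN, fun _ _ => by simp⟩, rfl⟩

theorem act_comp_mem_appendOutput {N : Set ((Y → ℝ) → (Z → ℝ))} {L : Set ((Z → ℝ) → (Z → ℝ))}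
    (hL : id ∈ L) {h : A → (Z → ℝ)} (hh : h ∈ appendOutput σ 𝒲 N) :
    (fun v => act σ (h v)) ∈ appendOutput σ (appendLayer σ 𝒲 N) L := by
  obtain ⟨k, g, hg, f, ⟨c, hc, e⟩, rfl⟩ := hh
  exact ⟨1, fun v p => f (act σ (g v)) p.2, ⟨k, g, hg, fun w p => f w p.2,
    ⟨fun _ => c, fun _ => hc, fun w p => e w p.2⟩, rfl⟩, fun w z => w (0, z),
    ⟨fun _ => id, fun _ => hL, fun w z => by simp⟩, rfl⟩

theorem sepRel_appendOutput_subset {N : Set ((Y → ℝ) → (Z → ℝ))}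
    {L : Set ((Z → ℝ) → (Z' → ℝ))} :
    sepRel (appendOutput σ 𝒲 N) ⊆ sepRel (appendOutput σ (appendLayer σ 𝒲 N) L) := by
  rintro ⟨u, v⟩ huv _ ⟨l, _, ⟨k, g, hg, m, ⟨c, hc, e⟩, rfl⟩, f, -, rfl⟩
  have hm : m (act σ (g u)) = m (act σ (g v)) := by
    funext ⟨i, z⟩
    exact congrFun (huv _ ⟨k, g, hg, fun w z => m w (i, z),
      ⟨c i, hc i, fun w z => e w (i, z)⟩, rfl⟩) z
  simp only [hm]

end Networks

section Continuity

variable {A Y Z : Type} {σ : ℝ → ℝ}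

theorem continuous_act (hσ : Continuous σ) : Continuous (act σ : (Z → ℝ) → (Z → ℝ)) :=
  continuous_pi fun z => hσ.comp (continuous_apply z)

theorem continuous_of_mem_layerPowIn {M : Set ((Y → ℝ) → (Z → ℝ))}
    (hM : ∀ f ∈ M, Continuous f) {k : ℕ} {g : (Y → ℝ) → (Fin k × Z → ℝ)}
    (hg : g ∈ layerPowIn M k) : Continuous g := by
  obtain ⟨f, hf, e⟩ := hg
  refine continuous_pi fun p => ?_
  simp only [e]
  exact (continuous_apply p.2).comp (hM _ (hf _))

theorem continuous_of_mem_layerPow {M : Set ((Y → ℝ) → (Z → ℝ))} (hM : ∀ f ∈ M, Continuous f)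
    {k l : ℕ} {g : (Fin k × Y → ℝ) → (Fin l × Z → ℝ)} (hg : g ∈ layerPow M k l) :
    Continuous g := by
  obtain ⟨f, hf, e⟩ := hg
  refine continuous_pi fun p => ?_
  simp only [e]
  exact continuous_finsetSum _ fun j _ =>
    (continuous_apply p.2).comp ((hM _ (hf _ _)).comp (by fun_prop))

theorem continuous_of_mem_layerPowOut {M : Set ((Y → ℝ) → (Z → ℝ))}
    (hM : ∀ f ∈ M, Continuous f) {k : ℕ} {g : (Fin k × Y → ℝ) → (Z → ℝ)}
    (hg : g ∈ layerPowOut M k) : Continuous g := by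
  obtain ⟨f, hf, e⟩ := hg
  refine continuous_pi fun z => ?_
  simp only [e]
  exact continuous_finsetSum _ fun j _ =>
    (continuous_apply z).comp ((hM _ (hf _)).comp (by fun_prop))

section

variable [TopologicalSpace A] {𝒲 : ∀ k, Set (A → (Fin k × Y → ℝ))}

theorem continuous_of_mem_appendLayer (hσ : Continuous σ)
    (h𝒲 : ∀ k, ∀ g ∈ 𝒲 k, Continuous g) {M : Set ((Y → ℝ) → (Z → ℝ))}
    (hM : ∀ f ∈ M, Continuous f) (k : ℕ) : ∀ F ∈ appendLayer σ 𝒲 M k, Continuous F := by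
  rintro _ ⟨l, g, hg, f, hf, rfl⟩
  exact (continuous_of_mem_layerPow hM hf).comp ((continuous_act hσ).comp (h𝒲 l g hg))

theorem continuous_of_mem_appendOutput (hσ : Continuous σ)
    (h𝒲 : ∀ k, ∀ g ∈ 𝒲 k, Continuous g) {N : Set ((Y → ℝ) → (Z → ℝ))}
    (hN : ∀ f ∈ N, Continuous f) : ∀ F ∈ appendOutput σ 𝒲 N, Continuous F := by
  rintro _ ⟨k, g, hg, f, hf, rfl⟩
  exact (continuous_of_mem_layerPowOut hN hf).comp ((continuous_act hσ).comp (h𝒲 k g hg))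

end

theorem continuous_of_mem_wPre (hσ : Continuous σ) {d : ℕ} {Y : Fin (d + 2) → Type}
    {M : ∀ i : Fin (d + 1), Set ((Y i.castSucc → ℝ) → (Y i.succ → ℝ))}
    (hM : ∀ i, ∀ f ∈ M i, Continuous f) (k : ℕ) : ∀ g ∈ WPre σ d Y M k, Continuous g := by
  induction d generalizing k with
  | zero => exact fun _ => continuous_of_mem_layerPowIn (hM 0)
  | succ d ih =>
    exact continuous_of_mem_appendLayer hσ (ih (Y := fun i => Y i.castSucc)
      (M := fun i => M i.castSucc) fun i => hM i.castSucc) (hM (Fin.last _)) k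

end Continuity

section Readout

/-- The fully connected layer space `Lfull`, as a vector space. -/
def fullSubmodule : Submodule ℝ ((Unit → ℝ) → (Unit → ℝ)) where
  carrier := Lfull
  zero_mem' := ⟨0, 0, by simp; rfl⟩
  add_mem' := by
    rintro _ _ ⟨a, b, rfl⟩ ⟨a', b', rfl⟩
    exact ⟨a + a', b + b', by funext v z; simp only [Pi.add_apply]; ring⟩
  smul_mem' := by
    rintro c _ ⟨a, b, rfl⟩
    exact ⟨c * a, c * b, by funext v z; simp only [Pi.smul_apply, smul_eq_mul]; ring⟩

theorem id_mem_lfull : id ∈ Lfull :=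
  ⟨1, 0, by simp; rfl⟩

theorem continuous_of_mem_lfull : ∀ f ∈ Lfull, Continuous f := by
  rintro _ ⟨a, b, rfl⟩
  fun_prop

theorem unifClosure_appendOutput_lfull {A Y : Type} [TopologicalSpace A]
    [WeaklyLocallyCompactSpace A] {σ : ℝ → ℝ} (hσc : Continuous σ) (hσ : NotPolynomial σ)
    {𝒲 : ∀ k, Set (A → (Fin k × Y → ℝ))} (h𝒲 : IsConcatClosed 𝒲)
    (h𝒲c : ∀ k, ∀ g ∈ 𝒲 k, Continuous g) {N : Submodule ℝ ((Y → ℝ) → (Unit → ℝ))}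
    (hone : 1 ∈ N) (hNc : ∀ f ∈ N, Continuous f) :
    UnifClosure (appendOutput σ (appendLayer σ 𝒲 (N : Set ((Y → ℝ) → (Unit → ℝ)))) Lfull) =
      Crho (sepRel (UnifClosure (appendOutput σ 𝒲 (N : Set ((Y → ℝ) → (Unit → ℝ)))))) := by
  rw [sepRel_unifClosure]
  apply Set.Subset.antisymm
  · have hcont := continuous_of_mem_appendOutput hσc
      (continuous_of_mem_appendLayer hσc h𝒲c hNc) continuous_of_mem_lfull
    exact (unifClosure_subset_crho hcont).trans fun _ hF =>
      ⟨hF.1, fun p hp => hF.2 p (sepRel_appendOutput_subset hp)⟩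
  · exact crho_sepRel_subset_unifClosure hσc hσ (S := outputSubmodule σ h𝒲 N)
      (T := outputSubmodule σ (h𝒲.appendLayer N.zero_mem) fullSubmodule)
      (continuous_of_mem_appendOutput hσc h𝒲c hNc) (h𝒲.one_mem_appendOutput hone)
      fun _ => act_comp_mem_appendOutput id_mem_lfull

end Readout

theorem uClassApp2_eq_unifClosure (σ : ℝ → ℝ) {d : ℕ} (Y : Fin (d + 2) → Type)
    (M : ∀ i : Fin (d + 1), Set ((Y i.castSucc → ℝ) → (Y i.succ → ℝ))) {Z₁ Z₂ : Type}
    [Fintype Z₂] (N₁ : Set ((Y (Fin.last (d + 1)) → ℝ) → (Z₁ → ℝ)))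
    (N₂ : Set ((Z₁ → ℝ) → (Z₂ → ℝ))) :
    UClassApp2 σ d Y M N₁ N₂ =
      UnifClosure (appendOutput σ (appendLayer σ (WPre σ d Y M) N₁) N₂) := by
  refine congrArg UnifClosure (Set.ext fun F => ⟨?_, ?_⟩)
  · rintro ⟨k₁, g, hg, k₂, m, hm, f, hf, rfl⟩
    exact ⟨k₂, _, ⟨k₁, g, hg, m, hm, rfl⟩, f, hf, rfl⟩
  · rintro ⟨k₂, _, ⟨k₁, g, hg, m, hm, rfl⟩, f, hf, rfl⟩
    exact ⟨k₁, g, hg, k₂, m, hm, f, hf, rfl⟩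

theorem invariant_separation_constrained_universality_general
    {d : ℕ} {Y : Fin (d + 2) → Type} [Finite (Y 0)]
    {M : ∀ i : Fin (d + 1), Set ((Y i.castSucc → ℝ) → (Y i.succ → ℝ))}
    (hM : ∀ i, 0 ∈ M i) (hMc : ∀ i, ∀ f ∈ M i, Continuous f)
    {N : Submodule ℝ ((Y (Fin.last (d + 1)) → ℝ) → (Unit → ℝ))} (hone : 1 ∈ N)
    (hNc : ∀ f ∈ N, Continuous f) {σ : ℝ → ℝ} (hσc : Continuous σ) (hσ : NotPolynomial σ) :
    UClassApp2 σ d Y M (N : Set ((Y (Fin.last (d + 1)) → ℝ) → (Unit → ℝ))) Lfull =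
      Crho (sepRel (UClassApp1 σ d Y M (N : Set ((Y (Fin.last (d + 1)) → ℝ) → (Unit → ℝ))))) := by
  rw [uClassApp2_eq_unifClosure]
  exact unifClosure_appendOutput_lfull hσc hσ (isConcatClosed_wPre hM)
    (continuous_of_mem_wPre hσc hMc) hone hNc

section LayerSpaces

/-- The invariant layer space `InvAff`, as a vector space. -/
def invAffSubmodule (G : Type) [Group G] (Y : Type) [MulAction G Y] :
    Submodule ℝ ((Y → ℝ) → (Unit → ℝ)) where
  carrier := InvAff G
  zero_mem' := ⟨⟨0, 0, fun _ => by simp⟩, fun _ _ => rfl⟩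
  add_mem' := by
    rintro f f' ⟨⟨φ, b, h⟩, hf⟩ ⟨⟨φ', b', h'⟩, hf'⟩
    refine ⟨⟨φ + φ', b + b', fun v => ?_⟩, fun g v => ?_⟩
    · simp only [Pi.add_apply, h, h', LinearMap.add_apply]
      abel
    · simp [hf, hf']
  smul_mem' := by
    rintro c f ⟨⟨φ, b, h⟩, hf⟩
    exact ⟨⟨c • φ, c • b, fun v => by simp [h]⟩, fun g v => by simp [hf]⟩

theorem one_mem_invAffSubmodule (G : Type) [Group G] (Y : Type) [MulAction G Y] :
    1 ∈ invAffSubmodule G Y :=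
  ⟨⟨0, 1, fun _ => by simp⟩, fun _ _ => rfl⟩

theorem IsAffine.continuous {Y Z : Type} [Finite Y] {f : (Y → ℝ) → (Z → ℝ)} (hf : IsAffine f) :
    Continuous f := by
  obtain ⟨φ, b, h⟩ := hf
  rw [funext h]
  refine Continuous.add (continuous_pi fun z => ?_) continuous_const
  exact ((LinearMap.proj z).comp φ).continuous_of_finiteDimensional

variable {G Y Z : Type} [Group G] [MulAction G Y] [MulAction G Z]
  {M : Set ((Y → ℝ) → (Z → ℝ))}

theorem IsLayerSpace.zero_mem (hM : IsLayerSpace G M) : 0 ∈ M := by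
  obtain ⟨k, φ, -, rfl⟩ := hM
  exact ⟨0, 0, fun _ _ => rfl, fun v => by simp⟩

theorem IsLayerSpace.isAffine (hM : IsLayerSpace G M) {f : (Y → ℝ) → (Z → ℝ)} (hf : f ∈ M) :
    IsAffine f := by
  obtain ⟨k, φ, -, rfl⟩ := hM
  obtain ⟨c, b, -, h⟩ := hf
  exact ⟨∑ i, c i • φ i, b, fun v => by simp [h]⟩

end LayerSpaces

/-- Theorem `th:invariant_universality`: separation-constrained
universality for invariant networks.  For layer spaces `M₀, …, M_d` between permutation
representations of a finite group `G`, with `I = Aff_G(V_d, ℝ)` the invariant layer space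
and `L = Aff(ℝ, ℝ)` the fully connected readout, and `σ` continuous and not a polynomial,
setting `ρ = ρ(U(M₀, …, M_d, I))` we have `U(M₀, …, M_d, I, L) = C_ρ(V₀, ℝ)`. -/
theorem invariant_separation_constrained_universality
    {G : Type} [Group G] [Fintype G]
    {d : ℕ} {Y : Fin (d + 2) → Type} [∀ i, Fintype (Y i)] [∀ i, MulAction G (Y i)]
    (M : ∀ i : Fin (d + 1), Set ((Y i.castSucc → ℝ) → (Y i.succ → ℝ)))
    (hM : ∀ i, IsLayerSpace G (M i))
    (σ : ℝ → ℝ) (hσc : Continuous σ) (hσp : NotPolynomial σ) :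
    UClassApp2 σ d Y M (InvAff G) Lfull
      = Crho (sepRel (UClassApp1 σ d Y M (InvAff G))) :=
  invariant_separation_constrained_universality_general (N := invAffSubmodule G _)
    (fun i => (hM i).zero_mem) (fun i _ hf => ((hM i).isAffine hf).continuous)
    (one_mem_invAffSubmodule G _) (fun _ hf => hf.1.continuous) hσc hσp
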